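/- Let L_n be a triangulated Laman graph on n ≥ 3 vertices and let (L_n,p) be a framework in the plane with p_1,…,p_n pairwise distinct. If (L_n,p) is strongly nondegenerate, then (L_n,p) is globally angle rigid: there exists an angle index set T ⊆ T_{L_n} such that f_T^{-1}(f_T(p)) = f_K^{-1}(f_K(p)), i.e., every configuration q whose angle cosines indexed by T agree with those of p has all of its angle cosines (over the complete graph) agreeing with those of p. -/

import Mathlib

open Matrix Real

/-- Points in the plane. -/
abbrev Vec2 := Fin 2 → ℝ

/-- Euclidean norm of a planar vector. -/
noncomputable def nrm (x : Vec2) : ℝ := Real.sqrt (x ⬝ᵥ x)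

/-- The bearing `g(x,y) = (x - y)/‖x - y‖`. -/
noncomputable def brg (x y : Vec2) : Vec2 := (nrm (x - y))⁻¹ • (x - y)

/-- Triangulated Laman graphs on vertex set `{0, …, n-1}` (edges stored as symmetric
pairs). -/
inductive IsTLGraph : ℕ → Finset (ℕ × ℕ) → Prop
  | base : IsTLGraph 2 {(0, 1), (1, 0)}
  | step {n : ℕ} {E : Finset (ℕ × ℕ)} {i j : ℕ} :
      IsTLGraph n E → (i, j) ∈ E →
      IsTLGraph (n + 1) (E ∪ {(n, i), (i, n), (n, j), (j, n)})

/-- Extension of a configuration on `Fin n` to all of `ℕ` (junk value `0` outside). -/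
noncomputable def ext {n : ℕ} (p : Fin n → Vec2) (i : ℕ) : Vec2 :=
  if h : i < n then p ⟨i, h⟩ else 0

/-- Cosine of the angle at vertex `t.1` between the edges towards `t.2.1` and `t.2.2`. -/
noncomputable def angCosN {n : ℕ} (p : Fin n → Vec2) (t : ℕ × ℕ × ℕ) : ℝ :=
  brg (ext p t.1) (ext p t.2.1) ⬝ᵥ brg (ext p t.1) (ext p t.2.2)

/-- A framework is strongly nondegenerate if the points of every triangle of the graph
are not collinear. -/
def StronglyNondeg {n : ℕ} (E : Finset (ℕ × ℕ)) (p : Fin n → Vec2) : Prop :=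
  ∀ i j k : ℕ, (i, j) ∈ E → (j, k) ∈ E → (i, k) ∈ E →
    ¬ Collinear ℝ ({ext p i, ext p j, ext p k} : Set Vec2)

/-!
The angles of `L_n` determine a framework up to similarity, by induction on the construction of
`L_n`. Suppose that the old vertices of `q` are similar to those of `p` with ratio `r`, and let the
new vertex `n` be attached to the edge `(i, j)`. Two angles of the nondegenerate triangle `i j n`
fix its shape, so the edge `(n, i)` is scaled by `r`. The angles at `i` between this edge and the
edges from `i` to its neighbours then show that the inner products of `p n - p i` with the vectors
`p b - p i`, `b` a neighbour of `i`, are scaled by `r²`. As `i` lies on a nondegenerate triangle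
(or is joined to all old vertices, if there are only two), these vectors span the directions to all
old vertices, so every distance from `n` is scaled by `r`.
-/

open EuclideanGeometry Similar
open scoped RealInnerProductSpace

section LinearAlgebra

lemma collinear_image_affineMap {k V V' P P' : Type*} [DivisionRing k]
    [AddCommGroup V] [Module k V] [AddTorsor V P] [AddCommGroup V'] [Module k V'] [AddTorsor V' P']
    (f : P →ᵃ[k] P') {s : Set P} (hs : Collinear k s) : Collinear k (f '' s) := by
  obtain ⟨p₀, v, hv⟩ := (collinear_iff_exists_forall_eq_smul_vadd s).1 hs
  refine (collinear_iff_exists_forall_eq_smul_vadd _).2 ⟨f p₀, f.linear v, ?_⟩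
  rintro _ ⟨p, hp, rfl⟩
  obtain ⟨c, rfl⟩ := hv p hp
  exact ⟨c, by rw [f.map_vadd, map_smul]⟩

lemma mem_affineSpan_triple_of_coplanar {k V P : Type*} [DivisionRing k] [AddCommGroup V]
    [Module k V] [AddTorsor V P] {s : Set P} (hs : Coplanar k s) {a b c x : P}
    (habc : ¬ Collinear k {a, b, c}) (ha : a ∈ s) (hb : b ∈ s) (hc : c ∈ s) (hx : x ∈ s) :
    x ∈ affineSpan k {a, b, c} := by
  have hsub : ({a, b, c} : Set P) ⊆ s := by
    simp [Set.insert_subset_iff, ha, hb, hc]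
  have hrange : Set.range ![a, b, c] = {a, b, c} := by
    simp only [Matrix.range_cons, Matrix.range_empty, Set.union_empty, Set.singleton_union]
  have hindep : AffineIndependent k ![a, b, c] := affineIndependent_iff_not_collinear_set.2 habc
  have := hs.finiteDimensional_vectorSpan
  have hspan : vectorSpan k {a, b, c} = vectorSpan k s := by
    refine Submodule.eq_of_le_of_finrank_le (vectorSpan_mono k hsub) ?_
    rw [← hrange, hindep.finrank_vectorSpan (n := 2) (by simp)]
    exact hs.finrank_le_two
  rw [← AffineSubspace.vsub_right_mem_direction_iff_mem (mem_affineSpan k (Set.mem_insert a _)),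
    direction_affineSpan, hspan]
  exact vsub_mem_vectorSpan k hx ha

end LinearAlgebra

section Euclidean

variable {V₁ V₂ P₁ P₂ : Type*}
  [NormedAddCommGroup V₁] [InnerProductSpace ℝ V₁] [MetricSpace P₁] [NormedAddTorsor V₁ P₁]
  [NormedAddCommGroup V₂] [InnerProductSpace ℝ V₂] [MetricSpace P₂] [NormedAddTorsor V₂ P₂]

lemma inner_linearCombination_eq_mul {ι : Type*} {u₁ : ι → V₁} {u₂ : ι → V₂} {c : ℝ}
    {x₁ : V₁} {x₂ : V₂} (h : ∀ b, ⟪x₂, u₂ b⟫ = c * ⟪x₁, u₁ b⟫) (l : ι →₀ ℝ) :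
    ⟪x₂, Finsupp.linearCombination ℝ u₂ l⟫ = c * ⟪x₁, Finsupp.linearCombination ℝ u₁ l⟫ := by
  simp only [Finsupp.linearCombination_apply, Finsupp.inner_sum, h,
    Finsupp.mul_sum, inner_smul_right, mul_left_comm]

-- `z₁` is a combination of the `u₁ b`, and `z₂` is the same combination of the `u₂ b`, since the
-- hypotheses determine the norm of the difference.
lemma inner_eq_mul_of_mem_span {ι : Type*} {u₁ : ι → V₁} {u₂ : ι → V₂} {c : ℝ}
    {x₁ z₁ : V₁} {x₂ z₂ : V₂} (huu : ∀ a b, ⟪u₂ a, u₂ b⟫ = c * ⟪u₁ a, u₁ b⟫)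
    (hzu : ∀ b, ⟪z₂, u₂ b⟫ = c * ⟪z₁, u₁ b⟫) (hzz : ⟪z₂, z₂⟫ = c * ⟪z₁, z₁⟫)
    (hxu : ∀ b, ⟪x₂, u₂ b⟫ = c * ⟪x₁, u₁ b⟫) (hz : z₁ ∈ Submodule.span ℝ (Set.range u₁)) :
    ⟪x₂, z₂⟫ = c * ⟪x₁, z₁⟫ := by
  rw [← Finsupp.range_linearCombination] at hz
  obtain ⟨l, rfl⟩ := hz
  set w₁ := Finsupp.linearCombination ℝ u₁ l
  set w₂ := Finsupp.linearCombination ℝ u₂ l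
  have hzw : ⟪z₂, w₂⟫ = c * ⟪w₁, w₁⟫ := inner_linearCombination_eq_mul hzu l
  have hww : ⟪w₂, w₂⟫ = c * ⟪w₁, w₁⟫ := by
    refine inner_linearCombination_eq_mul (fun b ↦ ?_) l
    rw [real_inner_comm, real_inner_comm (u₁ b)]
    exact inner_linearCombination_eq_mul (huu b) l
  have hz₂ : z₂ = w₂ := by
    rw [← sub_eq_zero, ← inner_self_eq_zero (𝕜 := ℝ), real_inner_sub_sub_self, hzz, hzw, hww]
    ring
  rw [hz₂]
  exact inner_linearCombination_eq_mul hxu l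

lemma inner_vsub_vsub_eq_dist (o a b : P₁) :
    ⟪a -ᵥ o, b -ᵥ o⟫ = (dist a o ^ 2 + dist b o ^ 2 - dist a b ^ 2) / 2 := by
  rw [real_inner_eq_norm_mul_self_add_norm_mul_self_sub_norm_sub_mul_self_div_two,
    vsub_sub_vsub_cancel_right]
  simp only [dist_eq_norm_vsub V₁, sq]

lemma inner_vsub_vsub_eq_cos_angle (o a b : P₁) :
    ⟪a -ᵥ o, b -ᵥ o⟫ = Real.cos (∠ a o b) * (dist a o * dist b o) := by
  rw [EuclideanGeometry.angle, dist_eq_norm_vsub V₁, dist_eq_norm_vsub V₁,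
    InnerProductGeometry.cos_angle_mul_norm_mul_norm]

lemma dist_eq_mul_dist_of_angle_eq {ι : Type*} {p : ι → P₁} {q : ι → P₂} {r : ℝ} (hr : 0 ≤ r)
    (hpq : ∀ a b, dist (q a) (q b) = r * dist (p a) (p b)) {x₁ z₁ : P₁} {x₂ z₂ : P₂} {o : ι}
    (hz : ∀ b, dist z₂ (q b) = r * dist z₁ (p b))
    (hx : dist x₂ (q o) = r * dist x₁ (p o))
    (hangle : ∀ b, ∠ x₂ (q o) (q b) = ∠ x₁ (p o) (p b))
    (hspan : z₁ ∈ affineSpan ℝ (Set.range p)) :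
    dist x₂ z₂ = r * dist x₁ z₁ := by
  have hinner : ⟪x₂ -ᵥ q o, z₂ -ᵥ q o⟫ = r ^ 2 * ⟪x₁ -ᵥ p o, z₁ -ᵥ p o⟫ := by
    refine inner_eq_mul_of_mem_span (u₁ := fun b ↦ p b -ᵥ p o) (u₂ := fun b ↦ q b -ᵥ q o)
      (fun a b ↦ ?_) (fun b ↦ ?_) ?_ (fun b ↦ ?_) ?_
    · simp only [inner_vsub_vsub_eq_dist, hpq]; ring
    · simp only [inner_vsub_vsub_eq_dist, hpq, hz]; ring
    · simp only [inner_vsub_vsub_eq_dist, hz, dist_self]; ring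
    · simp only [inner_vsub_vsub_eq_cos_angle, hpq, hx, hangle]; ring
    · rw [← vectorSpan_range_eq_span_range_vsub_right, ← direction_affineSpan]
      exact AffineSubspace.vsub_mem_direction hspan (mem_affineSpan ℝ (Set.mem_range_self o))
  rw [inner_vsub_vsub_eq_dist, inner_vsub_vsub_eq_dist, hx, hz] at hinner
  refine (sq_eq_sq₀ dist_nonneg (mul_nonneg hr dist_nonneg)).1 ?_
  linarith

lemma dist_eq_mul_dist_of_angle_angle {a b c : P₁} {a' b' c' : P₂} {r : ℝ}
    (habc : ¬ Collinear ℝ {a, b, c}) (hb : ∠ a' b' c' = ∠ a b c) (hc : ∠ b' c' a' = ∠ b c a)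
    (hab : dist a' b' = r * dist a b) :
    dist c' a' = r * dist c a := by
  obtain ⟨s, -, hs⟩ := similar_iff_exists_pos_dist_eq.1
    (similar_of_angle_angle habc hb.symm hc.symm).symm
  have hs01 : dist a' b' = s * dist a b := hs 0 1
  have hsr : s = r := mul_right_cancel₀ (dist_ne_zero.2 (ne₁₂_of_not_collinear habc))
    (hs01.symm.trans hab)
  exact hsr ▸ hs 2 0

lemma injective_of_similar {ι : Type*} {p : ι → P₁} {q : ι → P₂} (h : q ∼ p)
    (hp : Function.Injective p) : Function.Injective q := by
  obtain ⟨r, hr, hdist⟩ := similar_iff_exists_pos_dist_eq.1 h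
  intro a b hab
  refine hp (dist_eq_zero.1 ?_)
  simpa [hab, hr.ne'] using hdist a b

lemma angle_eq_of_similar {ι : Type*} {p : ι → P₁} {q : ι → P₂} (h : q ∼ p) (i j k : ι) :
    ∠ (q i) (q j) (q k) = ∠ (p i) (p j) (p k) := by
  obtain ⟨r, hr, hdist⟩ := h
  exact Similar.angle_eq ⟨r, hr, by simp [Fin.forall_fin_succ, hdist]⟩

end Euclidean

section TriangulatedLaman

namespace IsTLGraph

variable {n : ℕ} {E : Finset (ℕ × ℕ)}

lemma two_le (hE : IsTLGraph n E) : 2 ≤ n := by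
  induction hE with
  | base => exact le_rfl
  | step _ _ ih => omega

lemma symm (hE : IsTLGraph n E) {a b : ℕ} (hab : (a, b) ∈ E) : (b, a) ∈ E := by
  induction hE with
  | base => simpa [or_comm, and_comm] using hab
  | step _ _ ih => grind

lemma fst_lt_and_ne (hE : IsTLGraph n E) {a b : ℕ} (hab : (a, b) ∈ E) : a < n ∧ a ≠ b := by
  induction hE generalizing a b with
  | base =>
    simp only [Finset.mem_insert, Finset.mem_singleton, Prod.mk.injEq] at hab
    omega
  | @step n E i j hE hij ih =>
    have := ih hij
    have := ih (hE.symm hij)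
    grind

lemma fst_lt (hE : IsTLGraph n E) {a b : ℕ} (hab : (a, b) ∈ E) : a < n :=
  (hE.fst_lt_and_ne hab).1

lemma snd_lt (hE : IsTLGraph n E) {a b : ℕ} (hab : (a, b) ∈ E) : b < n :=
  hE.fst_lt (hE.symm hab)

lemma ne (hE : IsTLGraph n E) {a b : ℕ} (hab : (a, b) ∈ E) : a ≠ b :=
  (hE.fst_lt_and_ne hab).2

lemma subset_offDiag (hE : IsTLGraph n E) : E ⊆ (Finset.range n).offDiag := by
  rintro ⟨a, b⟩ hab
  simpa using ⟨hE.fst_lt hab, hE.snd_lt hab, hE.ne hab⟩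

lemma eq_or_mem_of_two (hE : IsTLGraph 2 E) {i a : ℕ} (hi : i < 2) (ha : a < 2) :
    a = i ∨ (i, a) ∈ E := by
  generalize h2 : 2 = m at hE
  cases hE with
  | base =>
    simp only [Finset.mem_insert, Finset.mem_singleton, Prod.mk.injEq]
    omega
  | step hE _ => have := hE.two_le; omega

lemma exists_triangle (hE : IsTLGraph n E) (hn : 3 ≤ n) {i : ℕ} (hi : i < n) :
    ∃ j k, (i, j) ∈ E ∧ (j, k) ∈ E ∧ (i, k) ∈ E := by
  induction hE with
  | base => omega
  | @step n E i₀ j₀ hE hij ih =>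
    have hji := hE.symm hij
    obtain rfl | rfl | rfl | ⟨hn, hi⟩ : i = n ∨ i = i₀ ∨ i = j₀ ∨ 3 ≤ n ∧ i < n := by
      have := hE.two_le
      have := hE.fst_lt hij
      have := hE.snd_lt hij
      have := hE.ne hij
      omega
    · exact ⟨i₀, j₀, by simp, by simp [hij], by simp⟩
    · exact ⟨j₀, n, by simp [hij], by simp, by simp⟩
    · exact ⟨i₀, n, by simp [hji], by simp, by simp⟩
    · obtain ⟨j, k, hj, hjk, hk⟩ := ih hn hi
      exact ⟨j, k, by simp [hj], by simp [hjk], by simp [hk]⟩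

end IsTLGraph

/-- `StronglyNondeg` for vertices placed in an arbitrary affine space. -/
def NondegenerateTriangles {V P : Type*} [AddCommGroup V] [Module ℝ V] [AddTorsor V P]
    (E : Finset (ℕ × ℕ)) (p : ℕ → P) : Prop :=
  ∀ i j k, (i, j) ∈ E → (j, k) ∈ E → (i, k) ∈ E → ¬ Collinear ℝ {p i, p j, p k}

lemma NondegenerateTriangles.mono {V P : Type*} [AddCommGroup V] [Module ℝ V] [AddTorsor V P]
    {E F : Finset (ℕ × ℕ)} {p : ℕ → P} (hEF : E ⊆ F) (h : NondegenerateTriangles F p) :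
    NondegenerateTriangles E p :=
  fun i j k hij hjk hik ↦ h i j k (hEF hij) (hEF hjk) (hEF hik)

variable {V₁ V₂ P₁ P₂ : Type*}
  [NormedAddCommGroup V₁] [InnerProductSpace ℝ V₁] [MetricSpace P₁] [NormedAddTorsor V₁ P₁]
  [NormedAddCommGroup V₂] [InnerProductSpace ℝ V₂] [MetricSpace P₂] [NormedAddTorsor V₂ P₂]

/-- `q` is a framework on the graph `E` with the same angles as `p`, that is,
`q ∈ f_T⁻¹(f_T(p))` for the set `T` of all angle indices of `E`. The two frameworks may live in
different spaces. -/
structure SameAngles (E : Finset (ℕ × ℕ)) (p : ℕ → P₁) (q : ℕ → P₂) : Prop where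
  ne : ∀ e ∈ E, q e.1 ≠ q e.2
  angle_eq : ∀ i j k, (i, j) ∈ E → (i, k) ∈ E → j ≠ k →
    ∠ (q j) (q i) (q k) = ∠ (p j) (p i) (p k)

lemma SameAngles.mono {E F : Finset (ℕ × ℕ)} {p : ℕ → P₁} {q : ℕ → P₂} (hEF : E ⊆ F)
    (h : SameAngles F p q) : SameAngles E p q :=
  ⟨fun e he ↦ h.ne e (hEF he), fun i j k hij hik ↦ h.angle_eq i j k (hEF hij) (hEF hik)⟩

lemma sameAngles_offDiag_of_similar {n : ℕ} {p : ℕ → P₁} {q : ℕ → P₂}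
    (hp : Set.InjOn p (Set.Iio n)) (h : (fun a : Fin n ↦ q a) ∼ fun a : Fin n ↦ p a) :
    SameAngles (Finset.range n).offDiag p q where
  ne := by
    have hq : Function.Injective fun a : Fin n ↦ q a :=
      injective_of_similar h fun a b hab ↦ Fin.ext (hp a.2 b.2 hab)
    rintro ⟨a, b⟩ hab
    simp only [Finset.mem_offDiag, Finset.mem_range] at hab
    exact fun heq ↦ hab.2.2 (Fin.mk.inj_iff.1 (@hq ⟨a, hab.1⟩ ⟨b, hab.2.1⟩ heq))
  angle_eq i j k hij hik _ := by
    simp only [Finset.mem_offDiag, Finset.mem_range] at hij hik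
    exact angle_eq_of_similar h ⟨j, hij.2.1⟩ ⟨i, hij.1⟩ ⟨k, hik.2.1⟩

lemma similar_fin_succ {n : ℕ} {p : ℕ → P₁} {q : ℕ → P₂} {r : ℝ} (hr : 0 < r)
    (hold : ∀ a b : Fin n, dist (q a) (q b) = r * dist (p a) (p b))
    (hnew : ∀ a : Fin n, dist (q n) (q a) = r * dist (p n) (p a)) :
    (fun a : Fin (n + 1) ↦ q a) ∼ fun a : Fin (n + 1) ↦ p a := by
  refine similar_iff_exists_pos_dist_eq.2 ⟨r, hr, fun a b ↦ ?_⟩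
  induction a using Fin.lastCases with
  | last =>
    induction b using Fin.lastCases with
    | last => simp
    | cast b => simpa using hnew b
  | cast a =>
    induction b using Fin.lastCases with
    | last => simpa [dist_comm] using hnew a
    | cast b => simpa using hold a b

namespace IsTLGraph

variable {n : ℕ} {E : Finset (ℕ × ℕ)} {p : ℕ → P₁} {q : ℕ → P₂}

lemma mem_affineSpan_closedNeighbors (hE : IsTLGraph n E)
    (hplane : Coplanar ℝ (p '' Set.Iio n)) (hnd : NondegenerateTriangles E p) {i a : ℕ}
    (hi : i < n) (ha : a < n) : p a ∈ affineSpan ℝ (p '' {b | b = i ∨ (i, b) ∈ E}) := by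
  obtain rfl | hn := hE.two_le.eq_or_lt
  · exact subset_affineSpan ℝ _ (Set.mem_image_of_mem p (hE.eq_or_mem_of_two hi ha))
  · obtain ⟨j, k, hij, hjk, hik⟩ := hE.exists_triangle hn hi
    have hspan : p a ∈ affineSpan ℝ {p i, p j, p k} :=
      mem_affineSpan_triple_of_coplanar hplane (hnd i j k hij hjk hik)
        (Set.mem_image_of_mem p hi) (Set.mem_image_of_mem p (hE.snd_lt hij))
        (Set.mem_image_of_mem p (hE.snd_lt hik)) (Set.mem_image_of_mem p ha)
    refine affineSpan_mono ℝ ?_ hspan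
    rintro _ (rfl | rfl | rfl)
    exacts [⟨i, .inl rfl, rfl⟩, ⟨j, .inr hij, rfl⟩, ⟨k, .inr hik, rfl⟩]

lemma dist_new_vertex_eq (hE : IsTLGraph n E) {i j : ℕ} (hij : (i, j) ∈ E)
    (hplane : Coplanar ℝ (p '' Set.Iio n))
    (hnd : NondegenerateTriangles (E ∪ {(n, i), (i, n), (n, j), (j, n)}) p)
    (h : SameAngles (E ∪ {(n, i), (i, n), (n, j), (j, n)}) p q) {r : ℝ} (hr : 0 < r)
    (hdist : ∀ a b : Fin n, dist (q a) (q b) = r * dist (p a) (p b)) (a : Fin n) :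
    dist (q n) (q a) = r * dist (p n) (p a) := by
  have hi := hE.fst_lt hij
  have hj := hE.snd_lt hij
  have hni : dist (q n) (q i) = r * dist (p n) (p i) :=
    dist_eq_mul_dist_of_angle_angle (hnd i j n (by simp [hij]) (by simp) (by simp))
      (h.angle_eq j i n (by simp [hE.symm hij]) (by simp) hi.ne)
      (h.angle_eq n j i (by simp) (by simp) (hE.ne hij).symm) (hdist ⟨i, hi⟩ ⟨j, hj⟩)
  let N := {b : ℕ | b = i ∨ (i, b) ∈ E}
  have hN : ∀ b ∈ N, b < n := by
    rintro b (rfl | hb)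
    exacts [hi, hE.snd_lt hb]
  refine dist_eq_mul_dist_of_angle_eq (p := fun b : N ↦ p b) (q := fun b : N ↦ q b)
    (o := ⟨i, .inl rfl⟩) hr.le (fun b c ↦ hdist ⟨b, hN b b.2⟩ ⟨c, hN c c.2⟩)
    (fun b ↦ hdist a ⟨b, hN b b.2⟩) hni ?_ ?_
  · rintro ⟨b, rfl | hb⟩
    · simp
    · exact h.angle_eq i n b (by simp) (by simp [hb]) (hE.snd_lt hb).ne'
  · rw [← Set.image_eq_range]
    exact hE.mem_affineSpan_closedNeighbors hplane (hnd.mono Finset.subset_union_left) hi a.2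

theorem similar_of_sameAngles (hE : IsTLGraph n E) (hplane : Coplanar ℝ (p '' Set.Iio n))
    (hp : Set.InjOn p (Set.Iio n)) (hnd : NondegenerateTriangles E p) (h : SameAngles E p q) :
    (fun a : Fin n ↦ q a) ∼ fun a : Fin n ↦ p a := by
  induction hE with
  | base =>
    have hp01 : 0 < dist (p 0) (p 1) := dist_pos.2 (hp.ne (by simp) (by simp) zero_ne_one)
    have hq01 : 0 < dist (q 0) (q 1) := dist_pos.2 (h.ne (0, 1) (by simp))
    refine similar_iff_exists_pos_dist_eq.2
      ⟨dist (q 0) (q 1) / dist (p 0) (p 1), by positivity, ?_⟩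
    simp [Fin.forall_fin_two, dist_comm, hp01.ne']
  | @step n E i j hE hij ih =>
    have hsub : E ⊆ E ∪ {(n, i), (i, n), (n, j), (j, n)} := Finset.subset_union_left
    have hIio : Set.Iio n ⊆ Set.Iio (n + 1) := Set.Iio_subset_Iio n.le_succ
    have hplane' := hplane.subset (Set.image_mono hIio)
    obtain ⟨r, hr, hdist⟩ := similar_iff_exists_pos_dist_eq.1 <|
      ih hplane' (hp.mono hIio) (hnd.mono hsub) (h.mono hsub)
    exact similar_fin_succ hr hdist (hE.dist_new_vertex_eq hij hplane' hnd h hr hdist)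

end IsTLGraph

end TriangulatedLaman

theorem tl_strongly_nondegenerate_implies_globally_angle_rigid_general {V₁ V₂ P₁ P₂ : Type*}
    [NormedAddCommGroup V₁] [InnerProductSpace ℝ V₁] [MetricSpace P₁] [NormedAddTorsor V₁ P₁]
    [NormedAddCommGroup V₂] [InnerProductSpace ℝ V₂] [MetricSpace P₂] [NormedAddTorsor V₂ P₂]
    {n : ℕ} {E : Finset (ℕ × ℕ)} (hE : IsTLGraph n E) {p : ℕ → P₁} {q : ℕ → P₂}
    (hplane : Coplanar ℝ (p '' Set.Iio n)) (hp : Set.InjOn p (Set.Iio n))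
    (hnd : NondegenerateTriangles E p) :
    SameAngles E p q ↔ SameAngles (Finset.range n).offDiag p q :=
  ⟨fun h ↦ sameAngles_offDiag_of_similar hp (hE.similar_of_sameAngles hplane hp hnd h),
    SameAngles.mono hE.subset_offDiag⟩

section CoordinatePlane

/-- The set `T_{L_n}` of all angle indices of the graph `E`. -/
def angleIndices (E : Finset (ℕ × ℕ)) : Finset (ℕ × ℕ × ℕ) :=
  ((E ×ˢ E.image Prod.snd).map (Equiv.prodAssoc ℕ ℕ ℕ).toEmbedding).filter
    fun t ↦ (t.1, t.2.2) ∈ E ∧ t.2.1 < t.2.2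

lemma mem_angleIndices {E : Finset (ℕ × ℕ)} {t : ℕ × ℕ × ℕ} :
    t ∈ angleIndices E ↔ (t.1, t.2.1) ∈ E ∧ (t.1, t.2.2) ∈ E ∧ t.2.1 < t.2.2 := by
  simp only [angleIndices, Finset.mem_filter, Finset.mem_map_equiv, Finset.mem_product,
    Finset.mem_image, Equiv.prodAssoc_symm_apply]
  grind

lemma nrm_eq_norm (x : Vec2) : nrm x = ‖WithLp.toLp 2 x‖ := by
  rw [norm_eq_sqrt_real_inner, EuclideanSpace.inner_toLp_toLp, star_trivial, nrm]

lemma brg_dotProduct_brg (x y z : Vec2) :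
    brg x y ⬝ᵥ brg x z = Real.cos (∠ (WithLp.toLp 2 y) (WithLp.toLp 2 x) (WithLp.toLp 2 z)) := by
  rw [EuclideanGeometry.angle, ← InnerProductGeometry.angle_neg_neg, neg_vsub_eq_vsub_rev,
    neg_vsub_eq_vsub_rev, InnerProductGeometry.cos_angle]
  simp only [vsub_eq_sub, ← WithLp.toLp_sub, EuclideanSpace.inner_toLp_toLp,
    star_trivial, brg, nrm_eq_norm, smul_dotProduct, dotProduct_smul, smul_eq_mul]
  rw [dotProduct_comm]
  field_simp

variable {n : ℕ}

/-- The configuration `ext p` in the Euclidean plane; `Vec2` itself carries the sup norm. -/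
noncomputable def euclideanExt (p : Fin n → Vec2) (i : ℕ) : EuclideanSpace ℝ (Fin 2) :=
  WithLp.toLp 2 (ext p i)

lemma angCosN_eq_iff {p q : Fin n → Vec2} {t : ℕ × ℕ × ℕ} :
    angCosN q t = angCosN p t ↔
      ∠ (euclideanExt q t.2.1) (euclideanExt q t.1) (euclideanExt q t.2.2) =
        ∠ (euclideanExt p t.2.1) (euclideanExt p t.1) (euclideanExt p t.2.2) := by
  rw [angCosN, angCosN, brg_dotProduct_brg, brg_dotProduct_brg]
  exact Real.injOn_cos.eq_iff ⟨angle_nonneg _ _ _, angle_le_pi _ _ _⟩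
    ⟨angle_nonneg _ _ _, angle_le_pi _ _ _⟩

lemma euclideanExt_inj {p : Fin n → Vec2} {i j : ℕ} :
    euclideanExt p i = euclideanExt p j ↔ ext p i = ext p j :=
  (WithLp.toLp_injective 2).eq_iff

lemma ext_val (p : Fin n → Vec2) (i : Fin n) : ext p i = p i := by
  simp [_root_.ext]

lemma injOn_euclideanExt {p : Fin n → Vec2} (hp : Function.Injective p) :
    Set.InjOn (euclideanExt p) (Set.Iio n) := by
  intro i hi j hj hij
  have := euclideanExt_inj.1 hij
  rw [ext_val p ⟨i, hi⟩, ext_val p ⟨j, hj⟩] at this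
  exact Fin.mk.inj_iff.1 (hp this)

lemma nondegenerateTriangles_euclideanExt {E : Finset (ℕ × ℕ)} {p : Fin n → Vec2}
    (h : StronglyNondeg E p) : NondegenerateTriangles E (euclideanExt p) := by
  intro i j k hij hjk hik hcol
  refine h i j k hij hjk hik ?_
  have := collinear_image_affineMap
    (WithLp.linearEquiv 2 ℝ Vec2).toLinearMap.toAffineMap hcol
  simpa [Set.image_insert_eq, euclideanExt] using this

lemma sameAngles_iff_angleIndices {E : Finset (ℕ × ℕ)} {p q : Fin n → Vec2} :
    SameAngles E (euclideanExt p) (euclideanExt q) ↔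
      (∀ e ∈ E, ext q e.1 ≠ ext q e.2) ∧ ∀ t ∈ angleIndices E, angCosN q t = angCosN p t := by
  simp only [angCosN_eq_iff, mem_angleIndices]
  refine ⟨fun h ↦ ⟨fun e he ↦ euclideanExt_inj.not.1 (h.ne e he),
    fun t ht ↦ h.angle_eq _ _ _ ht.1 ht.2.1 ht.2.2.ne⟩,
    fun h ↦ ⟨fun e he ↦ euclideanExt_inj.not.2 (h.1 e he), fun i j k hij hik hjk ↦ ?_⟩⟩
  obtain hjk | hkj := hjk.lt_or_gt
  · exact h.2 (i, j, k) ⟨hij, hik, hjk⟩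
  · rw [angle_comm, h.2 (i, k, j) ⟨hik, hij, hkj⟩, angle_comm]

lemma sameAngles_offDiag_iff {p q : Fin n → Vec2} :
    SameAngles (Finset.range n).offDiag (euclideanExt p) (euclideanExt q) ↔
      (∀ i j : Fin n, i ≠ j → q i ≠ q j) ∧
        ∀ i j k : ℕ, i < n → j < n → k < n → i ≠ j → i ≠ k → j ≠ k →
          angCosN q (i, j, k) = angCosN p (i, j, k) := by
  simp only [angCosN_eq_iff]
  constructor
  · intro h
    refine ⟨fun i j hij ↦ ?_, fun i j k hi hj hk hij hik ↦
      h.angle_eq i j k (by simp [hi, hj, hij]) (by simp [hi, hk, hik])⟩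
    rw [← ext_val q i, ← ext_val q j]
    exact euclideanExt_inj.not.1 (h.ne (i, j) (by simpa [Fin.val_inj] using hij))
  · rintro ⟨hne, hangle⟩
    refine ⟨fun e he ↦ ?_, fun i j k hij hik hjk ↦ ?_⟩
    · simp only [Finset.mem_offDiag, Finset.mem_range] at he
      exact (injOn_euclideanExt fun i j ↦ not_imp_not.1 (hne i j)).ne he.1 he.2.1 he.2.2
    · simp only [Finset.mem_offDiag, Finset.mem_range] at hij hik
      exact hangle i j k hij.1 hij.2.1 hik.2.1 hij.2.2 hik.2.2 hjk

end CoordinatePlane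

/-- a strongly nondegenerate framework on a triangulated Laman graph with
`n ≥ 3` vertices and pairwise distinct points is globally angle rigid: there is an angle
index set `T ⊆ T_{L_n}` such that `f_T⁻¹(f_T(p)) = f_K⁻¹(f_K(p))`, i.e. every
configuration whose `T`-angle cosines agree with those of `p` has all of its angle
cosines (over the complete graph) agreeing with those of `p`. -/
theorem tl_strongly_nondegenerate_implies_globally_angle_rigid
    {n : ℕ} (hn : 3 ≤ n) (E : Finset (ℕ × ℕ)) (hTL : IsTLGraph n E)
    (p : Fin n → Vec2)
    (hp : ∀ i j : Fin n, i ≠ j → p i ≠ p j)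
    (hsnd : StronglyNondeg E p) :
    ∃ T : Finset (ℕ × ℕ × ℕ),
      (∀ t ∈ T, (t.1, t.2.1) ∈ E ∧ (t.1, t.2.2) ∈ E ∧ t.2.1 < t.2.2) ∧
      {q : Fin n → Vec2 | (∀ e ∈ E, ext q e.1 ≠ ext q e.2) ∧
          ∀ t ∈ T, angCosN q t = angCosN p t} =
      {q : Fin n → Vec2 | (∀ i j : Fin n, i ≠ j → q i ≠ q j) ∧
          ∀ i j k : ℕ, i < n → j < n → k < n → i ≠ j → i ≠ k → j ≠ k →
            angCosN q (i, j, k) = angCosN p (i, j, k)} := by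
  refine ⟨angleIndices E, fun t ht ↦ mem_angleIndices.1 ht, Set.ext fun q ↦ ?_⟩
  have hpinj : Function.Injective p := fun i j ↦ not_imp_not.1 (hp i j)
  exact sameAngles_iff_angleIndices.symm.trans
    ((tl_strongly_nondegenerate_implies_globally_angle_rigid_general hTL
      (coplanar_of_finrank_eq_two _ finrank_euclideanSpace_fin) (injOn_euclideanExt hpinj)
      (nondegenerateTriangles_euclideanExt hsnd)).trans sameAngles_offDiag_iff)
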